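/- arXiv:2106.11552 — 4 statements merged into one kernel-verified Lean document; each statement's English description precedes it below -/
import Mathlib

section
/- Let m ≥ 1 and let H be a nontrivial finitely generated subgroup of the free group F_m. Then the language L_H is irreducible if and only if H is conjugacy reduced and H is not cyclic. -/
/-- The language of reduced words over `Σ = A ∪ A⁻¹` (letters encoded as `Fin m × Bool`)
that represent elements of the subgroup `H` of the free group `F_m`. -/
def LH (m : ℕ) (H : Subgroup (FreeGroup (Fin m))) : Set (List (Fin m × Bool)) :=
  {w | FreeGroup.reduce w = w ∧ FreeGroup.mk w ∈ H}

/-- A language `L` is irreducible if for all `w₁, w₂ ∈ L` there is a word `w`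
with `w₁ w w₂ ∈ L`. -/
def IrreducibleLang {α : Type*} (L : Set (List α)) : Prop :=
  ∀ w₁ ∈ L, ∀ w₂ ∈ L, ∃ w : List α, w₁ ++ w ++ w₂ ∈ L

/-- `H ≤ F_m` is conjugacy reduced if there is no letter `x ∈ Σ` such that every
nonempty word of `L_H` begins with `x⁻¹` and ends with `x`.
(The inverse of a letter `(i, b)` is `(i, !b)`.) -/
def ConjugacyReduced (m : ℕ) (H : Subgroup (FreeGroup (Fin m))) : Prop :=
  ¬ ∃ x : Fin m × Bool, ∀ w ∈ LH m H, w ≠ [] →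
      w.head? = some (x.1, !x.2) ∧ w.getLast? = some x

/-!
A nonempty word of `L_H` can be inserted between two others exactly when its first letter and the
first letter of its inverse avoid two prescribed letters. The difficulty is to avoid the same letter
`a` at both ends. If this is impossible, two nonempty words of `L_H` not starting with `a` are
always comparable for the suffix order, since otherwise the reduced form of `u v⁻¹` would avoid `a`
at both ends. Euclidean division by a shortest nonempty word not starting with `a` then shows that
`H` is cyclic.
-/

open FreeGroup

section ReducedWords

variable {α : Type*} {u v w : List (α × Bool)}

theorem invRev_eq_nil_iff : invRev w = [] ↔ w = [] := by
  simp [invRev]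

theorem head?_invRev_eq_some_iff {a : α × Bool} :
    (invRev w).head? = some a ↔ w.getLast? = some (a.1, !a.2) := by
  simp [invRev, Prod.ext_iff, Bool.not_eq_eq_eq_not]

theorem isReduced_invRev_iff : IsReduced (invRev w) ↔ IsReduced w := by
  classical
  rw [isReduced_iff_reduce_eq, reduce_invRev, invRev_injective.eq_iff, isReduced_iff_reduce_eq]

theorem eq_of_mk_eq_mk_of_isReduced (hu : IsReduced u) (hv : IsReduced v) (h : mk u = mk v) :
    u = v := by
  classical
  rw [← hu.reduce_eq, ← hv.reduce_eq, reduce.sound h]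

theorem isReduced_append_iff :
    IsReduced (u ++ v) ↔
      IsReduced u ∧ IsReduced v ∧ ∀ a, v.head? = some a → (invRev u).head? ≠ some a := by
  simp only [FreeGroup.IsReduced, List.isChain_append, Option.mem_def, ne_eq,
    head?_invRev_eq_some_iff]
  refine and_congr_right fun _ => and_congr_right fun _ => ⟨fun h a ha hl => ?_, ?_⟩
  · simpa using h _ hl a ha rfl
  · rintro h ⟨i, b⟩ hl ⟨j, c⟩ ha (rfl : i = j)
    by_contra hbc
    exact h _ ha (hl.trans (congrArg (fun d => some (i, d)) (Bool.eq_not_of_ne hbc)))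

theorem exists_common_suffix_isReduced_append_invRev (hu : IsReduced u) (hv : IsReduced v) :
    ∃ p q s, u = p ++ s ∧ v = q ++ s ∧ IsReduced (p ++ invRev q) := by
  induction u using List.reverseRecOn generalizing v with
  | nil => exact ⟨[], v, [], rfl, by simp, isReduced_invRev_iff.2 hv⟩
  | append_singleton u x ih =>
    rcases v.eq_nil_or_concat' with rfl | ⟨v, y, rfl⟩
    · exact ⟨u ++ [x], [], [], by simp, rfl, by simpa using hu⟩
    by_cases hxy : x = y
    · subst hxy
      obtain ⟨p, q, s, rfl, rfl, hpq⟩ :=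
        ih (isReduced_append_iff.1 hu).1 (isReduced_append_iff.1 hv).1
      exact ⟨p, q, s ++ [x], by simp, by simp, hpq⟩
    · refine ⟨u ++ [x], v ++ [y], [], by simp, by simp,
        isReduced_append_iff.2 ⟨hu, isReduced_invRev_iff.2 hv, fun a hy hx => hxy ?_⟩⟩
      rw [head?_invRev_eq_some_iff, List.getLast?_concat] at hx hy
      exact Option.some_injective _ (hx.trans hy.symm)

end ReducedWords

/-- The language `L_H` of reduced words representing elements of `H`, for a free group on an
arbitrary alphabet. Reducedness is expressed by `FreeGroup.IsReduced`, which needs no decidable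
equality of letters. -/
def reducedLanguage {α : Type*} (H : Subgroup (FreeGroup α)) : Set (List (α × Bool)) :=
  {w | IsReduced w ∧ mk w ∈ H}

/-- Conjugacy reducedness, as in `ConjugacyReduced`, over an arbitrary alphabet: no letter `x` is
such that every nonempty word of `L_H` begins with `x⁻¹` and ends with `x`. -/
def IsConjugacyReduced {α : Type*} (H : Subgroup (FreeGroup α)) : Prop :=
  ¬ ∃ x : α × Bool, ∀ w ∈ reducedLanguage H, w ≠ [] →
      w.head? = some (x.1, !x.2) ∧ w.getLast? = some x

/-- The nonempty words of `L_H` whose first letter is not `a`. Conditions on the last letter of a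
word are expressed through the first letter of its inverse `FreeGroup.invRev`. -/
def notStartingWith {α : Type*} (H : Subgroup (FreeGroup α)) (a : α × Bool) :
    Set (List (α × Bool)) :=
  {w | w ∈ reducedLanguage H ∧ w ≠ [] ∧ w.head? ≠ some a}

section ReducedLanguage

variable {α : Type*} {H : Subgroup (FreeGroup α)} {u v w : List (α × Bool)}

theorem invRev_mem_reducedLanguage (hw : w ∈ reducedLanguage H) :
    invRev w ∈ reducedLanguage H :=
  ⟨isReduced_invRev_iff.2 hw.1, inv_mk (L := w) ▸ H.inv_mem hw.2⟩

theorem append_mem_reducedLanguage (hu : u ∈ reducedLanguage H) (hv : v ∈ reducedLanguage H)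
    (h : ∀ a, v.head? = some a → (invRev u).head? ≠ some a) : u ++ v ∈ reducedLanguage H :=
  ⟨isReduced_append_iff.2 ⟨hu.1, hv.1, h⟩, mul_mk (L₁ := u) ▸ H.mul_mem hu.2 hv.2⟩

theorem mem_reducedLanguage_of_append_left (hu : u ∈ reducedLanguage H)
    (h : u ++ v ∈ reducedLanguage H) : v ∈ reducedLanguage H :=
  ⟨(isReduced_append_iff.1 h.1).2.1, (H.mul_mem_cancel_left hu.2).1 (mul_mk (L₁ := u) ▸ h.2)⟩

theorem mem_reducedLanguage_of_append_right (hv : v ∈ reducedLanguage H)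
    (h : u ++ v ∈ reducedLanguage H) : u ∈ reducedLanguage H :=
  ⟨(isReduced_append_iff.1 h.1).1, (H.mul_mem_cancel_right hv.2).1 (mul_mk (L₁ := u) ▸ h.2)⟩

theorem exists_common_suffix_mem_reducedLanguage (hu : u ∈ reducedLanguage H)
    (hv : v ∈ reducedLanguage H) :
    ∃ p q s, u = p ++ s ∧ v = q ++ s ∧ p ++ invRev q ∈ reducedLanguage H ∧
      mk (p ++ invRev q) = mk u * (mk v)⁻¹ := by
  obtain ⟨p, q, s, rfl, rfl, hred⟩ := exists_common_suffix_isReduced_append_invRev hu.1 hv.1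
  have hmk : mk (p ++ invRev q) = mk (p ++ s) * (mk (q ++ s))⁻¹ := by
    simp only [← mul_mk, ← inv_mk]
    group
  exact ⟨p, q, s, rfl, rfl, ⟨hred, hmk ▸ H.mul_mem hu.2 (H.inv_mem hv.2)⟩, hmk⟩

theorem exists_mem_reducedLanguage_mk_eq {g : FreeGroup α} (hg : g ∈ H) :
    ∃ w ∈ reducedLanguage H, mk w = g := by
  classical
  exact ⟨g.toWord, ⟨isReduced_toWord, by rwa [mk_toWord]⟩, mk_toWord⟩

theorem exists_mem_reducedLanguage_ne_nil (hnt : H ≠ ⊥) : ∃ w ∈ reducedLanguage H, w ≠ [] := by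
  obtain ⟨g, hg, hg1⟩ := H.bot_or_exists_ne_one.resolve_left hnt
  obtain ⟨w, hw, rfl⟩ := exists_mem_reducedLanguage_mk_eq hg
  exact ⟨w, hw, fun hw0 => hg1 (hw0 ▸ one_eq_mk.symm)⟩

theorem IsConjugacyReduced.notStartingWith_nonempty (h : IsConjugacyReduced H) (a : α × Bool) :
    (notStartingWith H a).Nonempty := by
  by_contra hempty
  have hall : ∀ w ∈ reducedLanguage H, w ≠ [] → w.head? = some a :=
    fun w hw hw0 => by_contra fun hwa => hempty ⟨w, hw, hw0, hwa⟩
  refine h ⟨(a.1, !a.2), fun w hw hw0 => ⟨by simpa using hall w hw hw0, ?_⟩⟩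
  exact head?_invRev_eq_some_iff.1
    (hall _ (invRev_mem_reducedLanguage hw) (invRev_eq_nil_iff.not.2 hw0))

theorem append_mem_notStartingWith_iff {a : α × Bool} (hu : u ≠ [])
    (h : u ++ v ∈ reducedLanguage H) : u ++ v ∈ notStartingWith H a ↔ u.head? ≠ some a := by
  simp [notStartingWith, h, hu]

end ReducedLanguage

section Cyclic

variable {α : Type*} {H : Subgroup (FreeGroup α)} {a : α × Bool} {u v : List (α × Bool)}

theorem isSuffix_or_isSuffix_of_mem_notStartingWith
    (hH : ∀ w ∈ notStartingWith H a, (invRev w).head? = some a)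
    (hu : u ∈ notStartingWith H a) (hv : v ∈ notStartingWith H a) : u <:+ v ∨ v <:+ u := by
  obtain ⟨p, q, s, rfl, rfl, hpq, -⟩ := exists_common_suffix_mem_reducedLanguage hu.1 hv.1
  rcases eq_or_ne p [] with rfl | hp
  · exact .inl (List.suffix_append q s)
  rcases eq_or_ne q [] with rfl | hq
  · exact .inr (List.suffix_append p s)
  have hpa := (append_mem_notStartingWith_iff hp hu.1).1 hu
  have hqa := hH _ ((append_mem_notStartingWith_iff hp hpq).2 hpa)
  rw [invRev_append, invRev_invRev, List.head?_append_of_ne_nil _ hq] at hqa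
  exact absurd hqa ((append_mem_notStartingWith_iff hq hv.1).1 hv)

theorem mk_mem_zpowers_of_mem_notStartingWith
    (hH : ∀ w ∈ notStartingWith H a, (invRev w).head? = some a)
    (hu : MinimalFor (· ∈ notStartingWith H a) List.length u) (hv : v ∈ notStartingWith H a) :
    mk v ∈ Subgroup.zpowers (mk u) := by
  induction hn : v.length using Nat.strong_induction_on generalizing v with
  | _ n ih =>
    have hsuffix : u <:+ v :=
      (isSuffix_or_isSuffix_of_mem_notStartingWith hH hu.prop hv).elim id fun h =>
        h.eq_of_length_le (hu.2 hv h.length_le) ▸ List.suffix_rfl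
    obtain ⟨p, rfl⟩ := hsuffix
    rw [← mul_mk]
    refine mul_mem ?_ (Subgroup.mem_zpowers _)
    rcases eq_or_ne p [] with rfl | hp
    · exact one_mem _
    have hpL := mem_reducedLanguage_of_append_right hu.prop.1 hv.1
    have hlt : p.length < n := by
      have := List.length_pos_iff.2 hu.prop.2.1
      rw [← hn, List.length_append]
      lia
    exact ih _ hlt ⟨hpL, hp, (append_mem_notStartingWith_iff hp hv.1).1 hv⟩ rfl

theorem mk_mem_zpowers_of_mem_reducedLanguage
    (hH : ∀ w ∈ notStartingWith H a, (invRev w).head? = some a)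
    (hu : MinimalFor (· ∈ notStartingWith H a) List.length u) (hv : v ∈ reducedLanguage H) :
    mk v ∈ Subgroup.zpowers (mk u) := by
  induction hn : v.length using Nat.strong_induction_on generalizing v with
  | _ n ih =>
    obtain ⟨p, q, s, hups, hvqs, hpq, hmk⟩ := exists_common_suffix_mem_reducedLanguage hu.prop.1 hv
    suffices mk (p ++ invRev q) ∈ Subgroup.zpowers (mk u) by
      rwa [hmk, Subgroup.mul_mem_cancel_left _ (Subgroup.mem_zpowers _), inv_mem_iff] at this
    rcases eq_or_ne p [] with rfl | hp
    · obtain rfl : u = s := hups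
      have hlt : (invRev q).length < n := by
        have := List.length_pos_iff.2 hu.prop.2.1
        rw [← hn, hvqs, List.length_append, invRev_length]
        lia
      exact ih _ hlt hpq rfl
    · have hpa : p.head? ≠ some a :=
        (append_mem_notStartingWith_iff hp (hups ▸ hu.prop.1)).1 (hups ▸ hu.prop)
      exact mk_mem_zpowers_of_mem_notStartingWith hH hu
        ((append_mem_notStartingWith_iff hp hpq).2 hpa)

theorem isCyclic_of_forall_mem_notStartingWith
    (hH : ∀ w ∈ notStartingWith H a, (invRev w).head? = some a)
    (hne : (notStartingWith H a).Nonempty) : IsCyclic H := by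
  obtain ⟨u, hu⟩ := exists_minimalFor_of_wellFoundedLT _ List.length hne
  refine H.isCyclic_iff_exists_zpowers_eq_top.2
    ⟨mk u, le_antisymm (Subgroup.zpowers_le.2 hu.prop.1.2) fun g hg => ?_⟩
  obtain ⟨v, hv, rfl⟩ := exists_mem_reducedLanguage_mk_eq hg
  exact mk_mem_zpowers_of_mem_reducedLanguage hH hu hv

end Cyclic

section Irreducible

variable {α : Type*} {H : Subgroup (FreeGroup α)}

theorem isConjugacyReduced_of_irreducibleLang (hnt : H ≠ ⊥)
    (h : IrreducibleLang (reducedLanguage H)) : IsConjugacyReduced H := by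
  rintro ⟨x, hx⟩
  obtain ⟨u, hu, hu0⟩ := exists_mem_reducedLanguage_ne_nil hnt
  obtain ⟨w, hw⟩ := h u hu u hu
  rw [List.append_assoc] at hw
  have hhead : (w ++ u).head? = some (x.1, !x.2) :=
    (hx _ (mem_reducedLanguage_of_append_left hu hw) (by simp [hu0])).1
  have hinv : (invRev u).head? = some (x.1, !x.2) :=
    (hx _ (invRev_mem_reducedLanguage hu) (invRev_eq_nil_iff.not.2 hu0)).1
  exact (isReduced_append_iff.1 hw.1).2.2 _ hhead hinv

theorem not_isMulCommutative_of_irreducibleLang (hnt : H ≠ ⊥)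
    (h : IrreducibleLang (reducedLanguage H)) : ¬ IsMulCommutative H := by
  intro hcomm
  obtain ⟨u, hu, hu0⟩ := exists_mem_reducedLanguage_ne_nil hnt
  have hu' := invRev_mem_reducedLanguage hu
  obtain ⟨w, huwu⟩ := h u hu _ hu'
  have hw : w ∈ reducedLanguage H :=
    mem_reducedLanguage_of_append_left hu (mem_reducedLanguage_of_append_right hu' huwu)
  have hmk : mk (u ++ w ++ invRev u) = mk w := by
    rw [← mul_mk, ← mul_mk, ← inv_mk, setLike_mul_comm hu.2 hw.2, mul_inv_cancel_right]
  have hlength := congrArg List.length (eq_of_mk_eq_mk_of_isReduced huwu.1 hw.1 hmk)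
  have := List.length_pos_iff.2 hu0
  simp only [List.length_append] at hlength
  lia

theorem IsConjugacyReduced.exists_mem_notStartingWith_head?_invRev_ne
    (h : IsConjugacyReduced H) (hcyc : ¬ IsCyclic H) (a c : α × Bool) :
    ∃ w ∈ notStartingWith H a, (invRev w).head? ≠ some c := by
  by_contra! hall
  rcases eq_or_ne a c with rfl | hac
  · exact hcyc (isCyclic_of_forall_mem_notStartingWith hall (h.notStartingWith_nonempty a))
  -- `u⁻¹` starts with `c` while `v` starts with `a` but `v⁻¹` does not start with `c`, so `u v`
  -- is reduced and contradicts `hall`.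
  obtain ⟨u, hu⟩ := h.notStartingWith_nonempty a
  obtain ⟨t, ht, ht0, htc⟩ := h.notStartingWith_nonempty c
  obtain ⟨v, rfl⟩ := invRev_surjective t
  have hv : v ∈ reducedLanguage H := invRev_invRev (L₁ := v) ▸ invRev_mem_reducedLanguage ht
  have hva : v.head? = some a :=
    by_contra fun hva => htc (hall v ⟨hv, invRev_eq_nil_iff.not.1 ht0, hva⟩)
  have huv : u ++ v ∈ reducedLanguage H := by
    refine append_mem_reducedLanguage hu.1 hv fun b hb hub => hac ?_
    exact Option.some_injective _ (hva.symm.trans (hb.trans (hub.symm.trans (hall u hu))))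
  have huvc := hall _ ((append_mem_notStartingWith_iff hu.2.1 huv).2 hu.2.2)
  rw [invRev_append, List.head?_append_of_ne_nil _ ht0] at huvc
  exact htc huvc

theorem IsConjugacyReduced.irreducibleLang (h : IsConjugacyReduced H) (hcyc : ¬ IsCyclic H) :
    IrreducibleLang (reducedLanguage H) := by
  intro u hu v hv
  rcases hu' : (invRev u).head? with _ | a
  · obtain rfl : u = [] := invRev_eq_nil_iff.1 (List.head?_eq_none_iff.1 hu')
    exact ⟨[], hv⟩
  rcases hv' : v.head? with _ | c
  · obtain rfl : v = [] := List.head?_eq_none_iff.1 hv'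
    exact ⟨[], by simpa using hu⟩
  obtain ⟨w, ⟨hw, hw0, hwa⟩, hwc⟩ := h.exists_mem_notStartingWith_head?_invRev_ne hcyc a c
  have huw : u ++ w ∈ reducedLanguage H :=
    append_mem_reducedLanguage hu hw fun b hb hub => hwa (hb.trans (hub.symm.trans hu'))
  refine ⟨w, append_mem_reducedLanguage huw hv fun b hb => ?_⟩
  rw [invRev_append, List.head?_append_of_ne_nil _ (invRev_eq_nil_iff.not.2 hw0), ← hb, hv']
  exact hwc

end Irreducible

theorem LH_irreducible_iff_general {α : Type*} (H : Subgroup (FreeGroup α)) (hnt : H ≠ ⊥) :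
    IrreducibleLang (reducedLanguage H) ↔ IsConjugacyReduced H ∧ ¬ IsCyclic H :=
  ⟨fun h => ⟨isConjugacyReduced_of_irreducibleLang hnt h, fun _ =>
      not_isMulCommutative_of_irreducibleLang hnt h inferInstance⟩,
    fun h => h.1.irreducibleLang h.2⟩

theorem LH_eq_reducedLanguage {m : ℕ} (H : Subgroup (FreeGroup (Fin m))) :
    LH m H = reducedLanguage H := by
  simp only [LH, reducedLanguage, isReduced_iff_reduce_eq]

/-- For a nontrivial finitely generated subgroup `H ≤ F_m`, the language `L_H` is
irreducible iff `H` is conjugacy reduced and not cyclic. -/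
theorem LH_irreducible_iff (m : ℕ) (hm : 1 ≤ m) (H : Subgroup (FreeGroup (Fin m)))
    (hnt : H ≠ ⊥) (hfg : H.FG) :
    IrreducibleLang (LH m H) ↔
      ConjugacyReduced m H ∧ ¬ ∃ g : FreeGroup (Fin m), H = Subgroup.zpowers g := by
  simpa only [ConjugacyReduced, LH_eq_reducedLanguage, IsConjugacyReduced,
    H.isCyclic_iff_exists_zpowers_eq_top, eq_comm] using LH_irreducible_iff_general H hnt
end

section
/- Let m ≥ 1 and let H be a nontrivial finitely generated subgroup of the free group F_m. Then H is conjugacy reduced and cyclic if and only if there exist two distinct letters a, b ∈ Σ such that every nonempty word of L_H either begins with a⁻¹ and ends with b, or begins with b⁻¹ and ends with a. -/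
/-!
A nontrivial power of `g` begins and ends like `g` or like `g⁻¹`, which settles the cyclic groups.
Conversely, let `S` be the set of elements of `H` beginning with `a⁻¹` and ending with `b`. Since
`a ≠ b`, no cancellation occurs in products of elements of `S`, so word length is additive on `S`;
and `H` is the union of `S`, `S⁻¹` and `{1}`. Euclidean descent on the length then shows that an
element of `S` of minimal length generates `H`.
-/

theorem isCyclic_of_additive_length {G : Type*} [Group G] (S : Set G) (ℓ : G → ℕ)
    (hpos : ∀ g ∈ S, 0 < ℓ g) (hmul : ∀ g ∈ S, ∀ h ∈ S, ℓ (g * h) = ℓ g + ℓ h)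
    (hS : ∀ g, g ≠ 1 → g ∈ S ∨ g⁻¹ ∈ S) : IsCyclic G := by
  rcases S.eq_empty_or_nonempty with rfl | hne
  · have hone : ∀ g : G, g = 1 := fun g => by_contra fun hg => by simpa using hS g hg
    exact ⟨1, fun g => ⟨0, (zpow_zero 1).trans (hone g).symm⟩⟩
  obtain ⟨g, hg, hmin⟩ : ∃ g ∈ S, ∀ h ∈ S, ℓ g ≤ ℓ h :=
    ⟨_, Function.argminOn_mem ℓ S hne, fun h hh => Function.argminOn_le ℓ S hh⟩
  have hpowers : ∀ h ∈ S, h ∈ Subgroup.zpowers g := by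
    intro h hh
    induction hn : ℓ h using Nat.strong_induction_on generalizing h with
    | _ n ih =>
      subst hn
      obtain ⟨k, rfl⟩ : ∃ k, h = g * k := ⟨g⁻¹ * h, (mul_inv_cancel_left g h).symm⟩
      refine Subgroup.mul_mem _ (Subgroup.mem_zpowers g) ?_
      by_cases hone : k = 1
      · exact hone ▸ Subgroup.one_mem _
      rcases hS k hone with hk | hk
      · have hlt : ℓ k < ℓ (g * k) := by
          rw [hmul g hg k hk]
          exact Nat.lt_add_of_pos_left (hpos g hg)
        exact ih (ℓ k) hlt k hk rfl
      · have hlt : ℓ (g * k) < ℓ g := calc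
          ℓ (g * k) < ℓ (g * k) + ℓ k⁻¹ := Nat.lt_add_of_pos_right (hpos k⁻¹ hk)
          _ = ℓ (g * k * k⁻¹) := (hmul (g * k) hh k⁻¹ hk).symm
          _ = ℓ g := by rw [mul_inv_cancel_right]
        exact absurd (hmin (g * k) hh) hlt.not_ge
  refine ⟨g, fun h => show h ∈ Subgroup.zpowers g from ?_⟩
  by_cases hone : h = 1
  · exact hone ▸ Subgroup.one_mem _
  · exact (hS h hone).elim (hpowers h) fun hinv => inv_mem_iff.1 (hpowers _ hinv)

section

open FreeGroup

variable {α : Type*} [DecidableEq α] {g h : FreeGroup α} {a b c d : α × Bool}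

/-- The reduced word of `g` begins with `a⁻¹` and ends with `b`. The inverse is put on the first
letter so that passing from `g` to `g⁻¹` exchanges `a` and `b`. -/
def HasEnds (g : FreeGroup α) (a b : α × Bool) : Prop :=
  g.toWord.head? = some (a.1, !a.2) ∧ g.toWord.getLast? = some b

theorem exists_hasEnds (hg : g ≠ 1) : ∃ a b, HasEnds g a b := by
  have hne : g.toWord ≠ [] := mt toWord_eq_nil_iff.1 hg
  refine ⟨((g.toWord.head hne).1, !(g.toWord.head hne).2), g.toWord.getLast hne, ?_, ?_⟩
  · simp [List.head?_eq_some_head hne]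
  · exact List.getLast?_eq_some_getLast hne

namespace HasEnds

theorem ne_one (hg : HasEnds g a b) : g ≠ 1 := by
  rintro rfl
  simp [HasEnds] at hg

theorem unique (hab : HasEnds g a b) (hcd : HasEnds g c d) : a = c ∧ b = d := by
  have hfirst := hab.1.symm.trans hcd.1
  have hlast := hab.2.symm.trans hcd.2
  simp only [Option.some.injEq, Prod.mk.injEq, Bool.not_inj_iff] at hfirst hlast
  exact ⟨Prod.ext hfirst.1 hfirst.2, hlast⟩

theorem inv (hg : HasEnds g a b) : HasEnds g⁻¹ b a := by
  simp [HasEnds, toWord_inv, invRev, hg.1, hg.2]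

theorem pow (hg : HasEnds g a b) {n : ℕ} (hn : n ≠ 0) : HasEnds (g ^ n) a b := by
  -- Write `g.toWord` as `u r u⁻¹` with `r` cyclically reduced: then `g ^ n` has word `u rⁿ u⁻¹`.
  rw [HasEnds, ← reduceCyclically.conj_conjugator_reduceCyclically g.toWord] at hg
  rw [HasEnds, toWord_pow, reduceCyclically.reduce_flatten_replicate isReduced_toWord, if_neg hn]
  simpa [List.head?_append, List.getLast?_append, List.head?_flatten_replicate hn,
    List.getLast?_flatten_replicate hn] using hg

theorem of_mem_zpowers (hg : HasEnds g a b) (hh : h ∈ Subgroup.zpowers g) (hne : h ≠ 1) :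
    HasEnds h a b ∨ HasEnds h b a := by
  obtain ⟨k, rfl⟩ := Subgroup.mem_zpowers_iff.1 hh
  have hk : k.natAbs ≠ 0 := by
    intro hk
    simp [Int.natAbs_eq_zero.1 hk] at hne
  obtain hpos | hneg := k.natAbs_eq
  · rw [hpos, zpow_natCast]
    exact .inl (hg.pow hk)
  · rw [hneg, zpow_neg, zpow_natCast]
    exact .inr (hg.pow hk).inv

theorem toWord_mul (hg : HasEnds g a b) (hh : HasEnds h c d) (hbc : b ≠ c) :
    (g * h).toWord = g.toWord ++ h.toWord := by
  have hred : IsReduced (g.toWord ++ h.toWord) := by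
    refine List.isChain_append.2 ⟨isReduced_toWord, isReduced_toWord, ?_⟩
    simp only [hg.2, hh.1, Option.mem_def, Option.some.injEq, forall_eq']
    exact fun hfst => Bool.eq_not_of_ne fun hsnd => hbc (Prod.ext hfst hsnd)
  rw [FreeGroup.toWord_mul, hred.reduce_eq]

theorem norm_mul (hg : HasEnds g a b) (hh : HasEnds h c d) (hbc : b ≠ c) :
    (g * h).norm = g.norm + h.norm := by
  simp only [FreeGroup.norm, hg.toWord_mul hh hbc, List.length_append]

end HasEnds

theorem isCyclic_of_forall_hasEnds {H : Subgroup (FreeGroup α)} (hab : a ≠ b)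
    (hH : ∀ g ∈ H, g ≠ 1 → HasEnds g a b ∨ HasEnds g b a) : IsCyclic H := by
  refine isCyclic_of_additive_length {g : H | HasEnds (g : FreeGroup α) a b}
    (fun g => (g : FreeGroup α).norm) (fun g hg => ?_) (fun g hg h hh => ?_) fun g hne => ?_
  · exact Nat.pos_of_ne_zero (mt norm_eq_zero.1 hg.ne_one)
  · exact hg.norm_mul hh hab.symm
  · exact (hH g g.2 (by simpa using hne)).imp_right HasEnds.inv

theorem conjugacyReduced_and_cyclic_iff_general (H : Subgroup (FreeGroup α)) (hnt : H ≠ ⊥) :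
    ((¬ ∃ x : α × Bool, ∀ g ∈ H, g ≠ 1 → HasEnds g x x) ∧ ∃ g, H = Subgroup.zpowers g) ↔
      ∃ a b : α × Bool, a ≠ b ∧ ∀ g ∈ H, g ≠ 1 → HasEnds g a b ∨ HasEnds g b a := by
  constructor
  · rintro ⟨hred, g, rfl⟩
    obtain ⟨a, b, hg⟩ := exists_hasEnds (mt Subgroup.zpowers_eq_bot.2 hnt)
    refine ⟨a, b, ?_, fun h hh hne => hg.of_mem_zpowers hh hne⟩
    rintro rfl
    exact hred ⟨a, fun h hh hne => or_self_iff.1 (hg.of_mem_zpowers hh hne)⟩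
  · rintro ⟨a, b, hab, hH⟩
    constructor
    · rintro ⟨x, hx⟩
      obtain ⟨g, hg, hne⟩ := H.bot_or_exists_ne_one.resolve_left hnt
      rcases hH g hg hne with hends | hends <;>
        obtain ⟨rfl, rfl⟩ := hends.unique (hx g hg hne) <;> exact hab rfl
    · obtain ⟨g, hg⟩ :=
        H.isCyclic_iff_exists_zpowers_eq_top.1 (isCyclic_of_forall_hasEnds hab hH)
      exact ⟨g, hg.symm⟩

theorem forall_mem_LH_iff {m : ℕ} {H : Subgroup (FreeGroup (Fin m))}
    {P : List (Fin m × Bool) → Prop} :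
    (∀ w ∈ LH m H, w ≠ [] → P w) ↔ ∀ g ∈ H, g ≠ 1 → P g.toWord := by
  constructor
  · intro hP g hg hne
    exact hP g.toWord ⟨reduce_toWord g, by rwa [mk_toWord]⟩ (mt toWord_eq_nil_iff.1 hne)
  · rintro hP w ⟨hw, hwH⟩ hne
    have hword : (mk w).toWord = w := toWord_mk.trans hw
    rw [← hword] at hne ⊢
    exact hP (mk w) hwH (mt toWord_eq_nil_iff.2 hne)

end

/-- A nontrivial finitely generated subgroup `H ≤ F_m` is conjugacy reduced and cyclic
iff there exist distinct letters `a ≠ b` in `Σ` such that every nonempty word of `L_H`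
either begins with `a⁻¹` and ends with `b`, or begins with `b⁻¹` and ends with `a`. -/
theorem conjugacyReduced_and_cyclic_iff (m : ℕ) (hm : 1 ≤ m)
    (H : Subgroup (FreeGroup (Fin m))) (hnt : H ≠ ⊥) (hfg : H.FG) :
    (ConjugacyReduced m H ∧ ∃ g : FreeGroup (Fin m), H = Subgroup.zpowers g) ↔
      ∃ a b : Fin m × Bool, a ≠ b ∧ ∀ w ∈ LH m H, w ≠ [] →
        (w.head? = some (a.1, !a.2) ∧ w.getLast? = some b) ∨
        (w.head? = some (b.1, !b.2) ∧ w.getLast? = some a) := by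
  simpa only [ConjugacyReduced, forall_mem_LH_iff, HasEnds] using
    conjugacyReduced_and_cyclic_iff_general H hnt
end

section
/- Let F₃ be the free group on three generators a, b, c, and let H be the subgroup of F₃ generated by {a², b, c, aba⁻¹, aca⁻¹}. Then the cogrowth series of H satisfies the rational identity (1−5z)(1−2z+5z²) · Σ_{n≥0} |H_n| zⁿ = (1+z)(1−4z+5z²) in the ring of formal power series over the rationals. -/
/-- `|H_n|`: the number of elements of the subgroup `H` of the free group `F₃`
whose reduced word length is `n`. -/
noncomputable def cogrowthCoeff (H : Subgroup (FreeGroup (Fin 3))) (n : ℕ) : ℕ :=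
  Nat.card {g : FreeGroup (Fin 3) // g ∈ H ∧ (FreeGroup.toWord g).length = n}

/-!
For a homomorphism `ψ` from a free group of rank `r` to the multiplicative monoid of a commutative
ring, let `F = ∑ g, ψ(g) z^|g|`, and let `Fₗ` be the part of the sum over the reduced words with
first letter `l`. Removing the first letter gives `Fₗ = z ψ(l) (F - F_{l⁻¹})`. Two applications
yield `(1 - z²) Fₗ = (z ψ(l) - z²) F`, and summing over the letters turns `F = 1 + ∑ Fₗ` into
`(1 - (∑ ψ(l)) z + (2r - 1) z²) F = 1 - z²`. The cogrowth series of the kernel of a homomorphism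
`ε` to `{±1}` is the mean of the series `F` for `ψ = 1` and for `ψ = ε`.
-/

open FreeGroup hiding map_mul map_one
open PowerSeries

section FirstLetter

variable {α : Type*} [DecidableEq α]

theorem mem_startsWith_iff_head? {l : α × Bool} {g : FreeGroup α} :
    g ∈ startsWith l ↔ g.toWord.head? = some l := by
  rw [startsWith, Set.mem_ofPred_eq, List.head?_eq_getElem?]

theorem toWord_mk_singleton_mul {l : α × Bool} {g : FreeGroup α}
    (hg : g ∉ startsWith (l.1, !l.2)) : (FreeGroup.mk [l] * g).toWord = l :: g.toWord := by
  have hword : (FreeGroup.mk [l] * g).toWord = reduce (l :: g.toWord) := by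
    rw [toWord_mul, toWord_mk, reduce_singleton, List.singleton_append]
  rw [hword, ← isReduced_iff_reduce_eq, FreeGroup.IsReduced, List.isChain_cons]
  refine ⟨fun m hm hlm => ?_, isReduced_toWord⟩
  by_contra hne
  rw [mem_startsWith_iff_head?, Option.mem_def.1 hm, hlm, ← Bool.eq_not_of_ne (Ne.symm hne)] at hg
  exact hg rfl

theorem mk_singleton_mul_image_compl_startsWith (l : α × Bool) :
    (FreeGroup.mk [l] * ·) '' (startsWith (l.1, !l.2))ᶜ = startsWith l := by
  ext g
  constructor
  · rintro ⟨h, hh, rfl⟩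
    exact startsWith_mk_mul h hh
  · intro hg
    obtain ⟨t, ht⟩ := List.head?_eq_some_iff.1 (mem_startsWith_iff_head?.1 hg)
    obtain ⟨hhead, htail⟩ := List.isChain_cons.1 (ht ▸ isReduced_toWord (x := g))
    have hword : (FreeGroup.mk t).toWord = t := by
      rw [toWord_mk, FreeGroup.IsReduced.reduce_eq htail]
    refine ⟨FreeGroup.mk t, fun h => ?_, ?_⟩
    · rw [mem_startsWith_iff_head?, hword] at h
      simpa using hhead _ h
    · simp [← ht, mk_toWord]

theorem single_one_add_sum_indicator_startsWith [Fintype α] {M : Type*} [AddCommMonoid M]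
    (f : FreeGroup α → M) :
    Pi.single 1 (f 1) + ∑ l, (startsWith l).indicator f = f := by
  classical
  ext g
  simp only [Pi.add_apply, Finset.sum_apply, Set.indicator_apply, mem_startsWith_iff_head?]
  rcases eq_or_ne g 1 with rfl | hne
  · simp
  · obtain ⟨l, t, hlt⟩ := List.exists_cons_of_ne_nil (toWord_eq_nil_iff.not.2 hne)
    simp [hlt, hne]

end FirstLetter

section LengthSeries

variable {α R : Type*} [DecidableEq α] [Semiring R]

variable (α) in
theorem finite_toWord_length_eq [Finite α] (n : ℕ) :
    {g : FreeGroup α | g.toWord.length = n}.Finite :=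
  (List.finite_length_eq (α × Bool) n).preimage toWord_injective.injOn

variable (α) in
/-- The sphere of radius `n` about `1` for the word metric on the free group on `α`. -/
noncomputable def wordSphere [Finite α] (n : ℕ) : Finset (FreeGroup α) :=
  (finite_toWord_length_eq α n).toFinset

theorem mem_wordSphere [Finite α] {n : ℕ} {g : FreeGroup α} :
    g ∈ wordSphere α n ↔ g.toWord.length = n := by
  simp [wordSphere]

/-- The generating series `∑ g, f(g) X^|g|` of a function `f` on a free group of finite rank, where
`|g|` is the reduced word length. -/
noncomputable def lengthSeries [Finite α] : (FreeGroup α → R) →ₗ[R] R⟦X⟧ where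
  toFun f := mk fun n => ∑ g ∈ wordSphere α n, f g
  map_add' f f' := by ext n; simp [Finset.sum_add_distrib]
  map_smul' c f := by ext n; simp [Finset.mul_sum]

theorem coeff_lengthSeries [Finite α] (f : FreeGroup α → R) (n : ℕ) :
    coeff n (lengthSeries f) = ∑ g ∈ wordSphere α n, f g :=
  coeff_mk n fun n => ∑ g ∈ wordSphere α n, f g

theorem lengthSeries_single_one [Finite α] (c : R) :
    lengthSeries (Pi.single (1 : FreeGroup α) c) = C c := by
  ext n
  classical
  simp only [coeff_lengthSeries, Pi.single_apply, Finset.sum_ite_eq', mem_wordSphere, toWord_one,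
    List.length_nil, coeff_C, eq_comm]

theorem lengthSeries_indicator_startsWith [Finite α] (f : FreeGroup α → R) (l : α × Bool) :
    lengthSeries ((startsWith l).indicator f) =
      X * lengthSeries ((startsWith (l.1, !l.2))ᶜ.indicator fun g => f (.mk [l] * g)) := by
  classical
  ext n
  cases n with
  | zero =>
    rw [coeff_zero_X_mul, coeff_lengthSeries]
    refine Finset.sum_eq_zero fun g hg => Set.indicator_of_notMem (fun hl => ?_) f
    exact startsWith.ne_one g hl (toWord_eq_nil_iff.1 (List.length_eq_zero_iff.1
      (mem_wordSphere.1 hg)))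
  | succ n =>
    rw [coeff_succ_X_mul, coeff_lengthSeries, coeff_lengthSeries]
    simp only [Set.indicator_apply, ← Finset.sum_filter]
    symm
    refine Finset.sum_nbij (FreeGroup.mk [l] * ·) (fun g hg => ?_) (mul_right_injective _).injOn
      (fun g hg => ?_) fun _ _ => rfl
    · obtain ⟨hlen, hstart⟩ := Finset.mem_filter.1 hg
      rw [Finset.mem_filter, mem_wordSphere, toWord_mk_singleton_mul hstart, List.length_cons,
        mem_wordSphere.1 hlen]
      exact ⟨rfl, startsWith_mk_mul g hstart⟩
    · obtain ⟨hlen, hstart⟩ := Finset.mem_filter.1 hg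
      rw [← mk_singleton_mul_image_compl_startsWith] at hstart
      obtain ⟨h, hh, rfl⟩ := hstart
      rw [mem_wordSphere, toWord_mk_singleton_mul hh, List.length_cons, Nat.add_right_cancel_iff,
        ← mem_wordSphere] at hlen
      exact ⟨h, Finset.mem_filter.2 ⟨hlen, hh⟩, rfl⟩

end LengthSeries

section Character

theorem sum_monoidHom_mk_singleton {α R : Type*} [Fintype α] [Semiring R] (ψ : FreeGroup α →* R) :
    ∑ l : α × Bool, ψ (.mk [l]) = ∑ i, (ψ (of i) + ψ (of i)⁻¹) := by
  simp [Fintype.sum_prod_type, of, invRev]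

variable {α R : Type*} [DecidableEq α] [CommRing R]

theorem lengthSeries_monoidHom_indicator_startsWith [Finite α] (ψ : FreeGroup α →* R)
    (l : α × Bool) :
    lengthSeries ((startsWith l).indicator ψ) = X * C (ψ (.mk [l])) *
      (lengthSeries ψ - lengthSeries ((startsWith (l.1, !l.2)).indicator ψ)) := by
  have hsmul : (startsWith (l.1, !l.2))ᶜ.indicator (fun g => ψ (.mk [l] * g)) =
      ψ (.mk [l]) • (⇑ψ - (startsWith (l.1, !l.2)).indicator ψ) := by
    rw [← Set.indicator_compl]
    simp only [map_mul]
    exact Set.indicator_const_smul _ (ψ (.mk [l])) ψ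
  rw [lengthSeries_indicator_startsWith, hsmul, map_smul, map_sub, smul_eq_C_mul, mul_assoc]

theorem one_sub_X_sq_mul_lengthSeries_indicator_startsWith [Finite α] (ψ : FreeGroup α →* R)
    (l : α × Bool) :
    (1 - X ^ 2) * lengthSeries ((startsWith l).indicator ψ) =
      (C (ψ (.mk [l])) * X - X ^ 2) * lengthSeries ψ := by
  have hinv : (C (ψ (.mk [l])) : R⟦X⟧) * C (ψ (.mk [(l.1, !l.2)])) = 1 := by
    have hmk : FreeGroup.mk [(l.1, !l.2)] = (FreeGroup.mk [l])⁻¹ := rfl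
    rw [hmk, ← map_mul, ← map_mul, mul_inv_cancel, map_one, map_one]
  have hl := lengthSeries_monoidHom_indicator_startsWith ψ l
  have hl' := lengthSeries_monoidHom_indicator_startsWith ψ (l.1, !l.2)
  rw [Bool.not_not] at hl'
  linear_combination hl - X * C (ψ (.mk [l])) * hl' - X ^ 2 *
    (lengthSeries ψ - lengthSeries ((startsWith l).indicator ψ)) * hinv

theorem mul_lengthSeries_monoidHom [Fintype α] (ψ : FreeGroup α →* R) :
    (1 - C (∑ i, (ψ (of i) + ψ (of i)⁻¹)) * X + (2 * (Fintype.card α : R⟦X⟧) - 1) * X ^ 2) *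
      lengthSeries ψ = 1 - X ^ 2 := by
  have hdecomp : 1 + ∑ l, lengthSeries ((startsWith l).indicator ψ) = lengthSeries ψ := by
    have h := congrArg lengthSeries (single_one_add_sum_indicator_startsWith (⇑ψ))
    rwa [map_add, map_sum, map_one, lengthSeries_single_one, map_one] at h
  have hsum : (1 - X ^ 2) * ∑ l, lengthSeries ((startsWith l).indicator ψ) =
      (C (∑ i, (ψ (of i) + ψ (of i)⁻¹)) * X - 2 * (Fintype.card α : R⟦X⟧) * X ^ 2) *
        lengthSeries ψ := by
    rw [Finset.mul_sum, ← sum_monoidHom_mk_singleton, map_sum]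
    simp only [one_sub_X_sq_mul_lengthSeries_indicator_startsWith, ← Finset.sum_mul,
      Finset.sum_sub_distrib, Finset.sum_const, Finset.card_univ, Fintype.card_prod,
      Fintype.card_bool, nsmul_eq_mul]
    push_cast
    ring
  linear_combination (X ^ 2 - 1) * hdecomp + hsum

variable (α R) in
theorem mul_lengthSeries_one [Fintype α] :
    (1 - (2 * (Fintype.card α : R⟦X⟧) - 1) * X) * lengthSeries (1 : FreeGroup α → R) = 1 + X := by
  -- For `ψ = 1` the quadratic factor is `1 - 2rX + (2r - 1)X² = (1 - X)(1 - (2r - 1)X)`.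
  have hunit : IsUnit (1 - X : R⟦X⟧) := by simp [isUnit_iff_constantCoeff]
  refine hunit.mul_left_cancel ?_
  have hone : ⇑(1 : FreeGroup α →* R) = 1 := rfl
  have h := mul_lengthSeries_monoidHom (1 : FreeGroup α →* R)
  simp only [MonoidHom.one_apply, hone, Finset.sum_const, Finset.card_univ,
    nsmul_eq_mul, map_mul, map_add, map_natCast, map_one] at h
  linear_combination h

end Character

section Cogrowth

variable {α : Type*} [DecidableEq α]

/-- The cogrowth series of a subgroup of a free group of finite rank: the generating series of its
elements by reduced word length. -/
noncomputable def cogrowthSeries (H : Subgroup (FreeGroup α)) : ℤ⟦X⟧ :=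
  PowerSeries.mk fun n => (Nat.card {g : FreeGroup α // g ∈ H ∧ g.toWord.length = n} : ℤ)

theorem cogrowthSeries_eq_lengthSeries [Finite α] (H : Subgroup (FreeGroup α)) :
    cogrowthSeries H = lengthSeries ((H : Set (FreeGroup α)).indicator 1) := by
  classical
  ext n
  have hcard : Nat.card {g : FreeGroup α // g ∈ H ∧ g.toWord.length = n} =
      ((wordSphere α n).filter (· ∈ H)).card :=
    Nat.subtype_card _ fun g => by rw [Finset.mem_filter, mem_wordSphere, and_comm]
  simp [cogrowthSeries, hcard, coeff_lengthSeries, Set.indicator_apply]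

theorem two_mul_cogrowthSeries_ker [Finite α] (ε : FreeGroup α →* ℤˣ) :
    2 * cogrowthSeries ε.ker =
      lengthSeries (1 : FreeGroup α → ℤ) + lengthSeries ((Units.coeHom ℤ).comp ε) := by
  have hsum : 2 • ((ε.ker : Set (FreeGroup α)).indicator 1 : FreeGroup α → ℤ) =
      1 + (Units.coeHom ℤ).comp ε := by
    ext g
    rcases Int.units_eq_one_or (ε g) with h | h <;> simp [MonoidHom.mem_ker, h]
  rw [cogrowthSeries_eq_lengthSeries, ← map_add, ← hsum, map_nsmul, nsmul_eq_mul, Nat.cast_ofNat]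

theorem mul_cogrowthSeries_ker [Fintype α] (ε : FreeGroup α →* ℤˣ) :
    (1 - (2 * (Fintype.card α : ℤ⟦X⟧) - 1) * X) *
        (1 - 2 * C (∑ i, (ε (of i) : ℤ)) * X + (2 * (Fintype.card α : ℤ⟦X⟧) - 1) * X ^ 2) *
        cogrowthSeries ε.ker =
      (1 + X) * (1 - (C (∑ i, (ε (of i) : ℤ)) + (Fintype.card α : ℤ⟦X⟧)) * X +
        (2 * (Fintype.card α : ℤ⟦X⟧) - 1) * X ^ 2) := by
  have htrivial := mul_lengthSeries_one α ℤ
  have hsign := mul_lengthSeries_monoidHom ((Units.coeHom ℤ).comp ε)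
  have htrace : ∑ i, (((Units.coeHom ℤ).comp ε) (of i) + ((Units.coeHom ℤ).comp ε) (of i)⁻¹) =
      2 * ∑ i, (ε (of i) : ℤ) := by
    simp [Finset.mul_sum, two_mul]
  rw [htrace, map_mul, map_ofNat] at hsign
  have htwo : (2 : ℤ⟦X⟧) ≠ 0 := by
    rw [← map_ofNat C 2]
    exact (map_ne_zero_iff C C_injective).2 two_ne_zero
  refine mul_left_cancel₀ htwo ?_
  linear_combination
    (1 - (2 * (Fintype.card α : ℤ⟦X⟧) - 1) * X) *
      (1 - 2 * C (∑ i, (ε (of i) : ℤ)) * X + (2 * (Fintype.card α : ℤ⟦X⟧) - 1) * X ^ 2) *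
        two_mul_cogrowthSeries_ker ε +
    (1 - 2 * C (∑ i, (ε (of i) : ℤ)) * X + (2 * (Fintype.card α : ℤ⟦X⟧) - 1) * X ^ 2) *
      htrivial + (1 - (2 * (Fintype.card α : ℤ⟦X⟧) - 1) * X) * hsign

end Cogrowth

section Subgroup

theorem mem_or_mul_mem_of_closure_eq_top {G : Type*} [Group G] {H : Subgroup G} {S : Set G}
    {a : G} (hS : Subgroup.closure S = ⊤) (ha : a * a ∈ H)
    (hconj : ∀ s ∈ S, s ≠ a → s ∈ H ∧ a * s * a⁻¹ ∈ H) (g : G) : g ∈ H ∨ a * g ∈ H := by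
  have hstep {x y : G} (hx : x ∈ H ∧ a * x * a⁻¹ ∈ H) (hy : y ∈ H ∨ a * y ∈ H) :
      x * y ∈ H ∨ a * (x * y) ∈ H :=
    hy.imp (H.mul_mem hx.1) fun h => by simpa [mul_assoc] using H.mul_mem hx.2 h
  have hg : g ∈ Subgroup.closure S := hS ▸ Subgroup.mem_top g
  induction hg using Subgroup.closure_induction_left with
  | one => exact .inl H.one_mem
  | mul_left s hs y _ ih =>
    obtain rfl | hne := eq_or_ne s a
    · rw [← mul_assoc]
      exact ih.symm.imp id (H.mul_mem ha)
    · exact hstep (hconj s hs hne) ih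
  | inv_mul_cancel s hs y _ ih =>
    obtain rfl | hne := eq_or_ne s a
    · refine ih.symm.imp (fun hy => ?_) fun hy => by rwa [mul_inv_cancel_left]
      simpa [mul_assoc] using H.mul_mem (H.inv_mem ha) hy
    · refine hstep ((hconj s hs hne).imp H.inv_mem fun h => ?_) ih
      simpa [mul_assoc] using H.inv_mem h

variable {α : Type*} [DecidableEq α]

/-- The homomorphism to `{±1}` which sends the generator `a` to `-1` and the others to `1`; its
value at `g` is the parity of the number of letters `a^{±1}` in `g`. -/
def parityHom (a : α) : FreeGroup α →* ℤˣ :=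
  FreeGroup.lift (Function.update 1 a (-1))

theorem parityHom_of_self (a : α) : parityHom a (of a) = -1 := by
  simp [parityHom]

theorem parityHom_of_ne {a b : α} (h : b ≠ a) : parityHom a (of b) = 1 := by
  simp [parityHom, h]

theorem closure_eq_ker_parityHom (a : α) :
    Subgroup.closure ({of a ^ 2} ∪ of '' {a}ᶜ ∪ (fun b => of a * of b * (of a)⁻¹) '' {a}ᶜ) =
      (parityHom a).ker := by
  set H := Subgroup.closure
    ({of a ^ 2} ∪ of '' {a}ᶜ ∪ (fun b => of a * of b * (of a)⁻¹) '' {a}ᶜ) with hH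
  have hle : H ≤ (parityHom a).ker := by
    rw [hH, Subgroup.closure_le]
    rintro _ ((rfl | ⟨b, hb, rfl⟩) | ⟨b, hb, rfl⟩) <;>
      simp_all [MonoidHom.mem_ker, parityHom_of_self, parityHom_of_ne]
  have hsq : of a * of a ∈ H := sq (of a) ▸ Subgroup.subset_closure (.inl (.inl rfl))
  have hconj : ∀ s ∈ Set.range of, s ≠ of a → s ∈ H ∧ of a * s * (of a)⁻¹ ∈ H := by
    rintro _ ⟨b, rfl⟩ hne
    have hb : b ∈ ({a}ᶜ : Set α) := fun h => hne (congrArg of h)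
    exact ⟨Subgroup.subset_closure (.inl (.inr ⟨b, hb, rfl⟩)),
      Subgroup.subset_closure (.inr ⟨b, hb, rfl⟩)⟩
  refine le_antisymm hle fun g hg =>
    (mem_or_mul_mem_of_closure_eq_top (closure_range_of α) hsq hconj g).resolve_right fun hag => ?_
  have hparity := hle hag
  rw [MonoidHom.mem_ker, map_mul, MonoidHom.mem_ker.1 hg, parityHom_of_self] at hparity
  simp at hparity

theorem sum_parityHom_of [Fintype α] (a : α) :
    ∑ i, (parityHom a (of i) : ℤ) = Fintype.card α - 2 := by
  have hof (i : α) : (parityHom a (of i) : ℤ) = 1 - if i = a then 2 else 0 := by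
    split_ifs with h
    · rw [h, parityHom_of_self]; rfl
    · rw [parityHom_of_ne h]; rfl
  simp [hof]

end Subgroup

theorem map_cogrowthSeries (H : Subgroup (FreeGroup (Fin 3))) :
    PowerSeries.map (Int.castRingHom ℚ) (cogrowthSeries H) =
      PowerSeries.mk fun n => (cogrowthCoeff H n : ℚ) := by
  ext n
  simp [cogrowthSeries, cogrowthCoeff]

theorem parity_generators_fin_three :
    ({of 0 ^ 2, of 1, of 2, of 0 * of 1 * (of 0)⁻¹, of 0 * of 2 * (of 0)⁻¹} :
      Set (FreeGroup (Fin 3))) =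
      {of 0 ^ 2} ∪ of '' {0}ᶜ ∪ (fun b => of 0 * of b * (of 0)⁻¹) '' {0}ᶜ := by
  have hcompl : ({0}ᶜ : Set (Fin 3)) = {1, 2} := by ext i; fin_cases i <;> simp
  simp only [hcompl, Set.image_pair, Set.singleton_union, Set.insert_union]

theorem example_cogrowth_identity_general {α : Type*} [Fintype α] [DecidableEq α] (a : α)
    (H : Subgroup (FreeGroup α))
    (hH : H = Subgroup.closure
      ({of a ^ 2} ∪ of '' {a}ᶜ ∪ (fun b => of a * of b * (of a)⁻¹) '' {a}ᶜ)) :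
    (1 - (2 * (Fintype.card α : ℤ⟦X⟧) - 1) * X) *
        (1 - 2 * ((Fintype.card α : ℤ⟦X⟧) - 2) * X + (2 * (Fintype.card α : ℤ⟦X⟧) - 1) * X ^ 2) *
        cogrowthSeries H =
      (1 + X) * (1 - 2 * ((Fintype.card α : ℤ⟦X⟧) - 1) * X +
        (2 * (Fintype.card α : ℤ⟦X⟧) - 1) * X ^ 2) := by
  have h := mul_cogrowthSeries_ker (parityHom a)
  rw [sum_parityHom_of, map_sub, map_natCast, map_ofNat, ← closure_eq_ker_parityHom, ← hH] at h
  rw [h]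
  ring

/-- For the subgroup `H = ⟨a², b, c, aba⁻¹, aca⁻¹⟩` of `F₃`, the cogrowth series
satisfies `(1−5z)(1−2z+5z²)·H(z) = (1+z)(1−4z+5z²)` in `ℚ⟦z⟧`. -/
theorem example_cogrowth_identity (H : Subgroup (FreeGroup (Fin 3)))
    (hH : H = Subgroup.closure
      {FreeGroup.of 0 ^ 2, FreeGroup.of 1, FreeGroup.of 2,
        FreeGroup.of 0 * FreeGroup.of 1 * (FreeGroup.of 0)⁻¹,
        FreeGroup.of 0 * FreeGroup.of 2 * (FreeGroup.of 0)⁻¹}) :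
    (1 - 5 * PowerSeries.X) * (1 - 2 * PowerSeries.X + 5 * PowerSeries.X ^ 2) *
        PowerSeries.mk (fun n => (cogrowthCoeff H n : ℚ)) =
      (1 + PowerSeries.X) * (1 - 4 * PowerSeries.X + 5 * PowerSeries.X ^ 2) := by
  have h := congrArg (PowerSeries.map (Int.castRingHom ℚ))
    (example_cogrowth_identity_general 0 H (parity_generators_fin_three ▸ hH))
  simp only [map_mul, map_cogrowthSeries, map_add, map_sub, map_pow, map_one, map_ofNat,
    map_X, Fintype.card_fin, Nat.cast_ofNat] at h
  linear_combination h
end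

section
/- Let m ≥ 1 and let H be a nontrivial finitely generated subgroup of the free group F_m. Then there exists g ∈ F_m such that the conjugate subgroup gHg⁻¹ is conjugacy reduced. -/
/-! A nontrivial element of `H` has the form `c * r * c⁻¹`, where `r` is a nonempty cyclically
reduced word. Conjugating `H` by `c⁻¹` puts `r` into the language of the conjugate, and a cyclically
reduced word cannot begin with `x⁻¹` and end with `x`. -/

theorem getLast?_ne_of_isCyclicallyReduced {α : Type*} {w : List (α × Bool)} {x : α × Bool}
    (hw : FreeGroup.IsCyclicallyReduced w) (hhead : w.head? = some (x.1, !x.2)) :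
    w.getLast? ≠ some x := fun hlast ↦
  have hsign : x.2 = !x.2 := hw.2 x hlast (x.1, !x.2) hhead rfl
  (Bool.eq_not_self x.2).mp hsign

theorem exists_isCyclicallyReduced_toWord_conj {α : Type*} [DecidableEq α] (g : FreeGroup α) :
    ∃ c : FreeGroup α, FreeGroup.IsCyclicallyReduced (MulAut.conj c g).toWord := by
  set r := FreeGroup.reduceCyclically g.toWord
  set c := FreeGroup.mk (FreeGroup.reduceCyclically.conjugator g.toWord)
  have hr : FreeGroup.IsCyclicallyReduced r :=
    FreeGroup.reduceCyclically.isCyclicallyReduced FreeGroup.isReduced_toWord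
  have hg : c * FreeGroup.mk r * c⁻¹ = g := by
    rw [FreeGroup.inv_mk, FreeGroup.mul_mk, FreeGroup.mul_mk,
      FreeGroup.reduceCyclically.conj_conjugator_reduceCyclically, FreeGroup.mk_toWord]
  have hconj : MulAut.conj c⁻¹ g = FreeGroup.mk r := by
    rw [← hg, MulAut.conj_apply]
    group
  refine ⟨c⁻¹, ?_⟩
  rwa [hconj, FreeGroup.toWord_mk, hr.isReduced.reduce_eq]

theorem toWord_mem_LH_iff {m : ℕ} {H : Subgroup (FreeGroup (Fin m))} {g : FreeGroup (Fin m)} :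
    g.toWord ∈ LH m H ↔ g ∈ H := by
  simp [LH, FreeGroup.mk_toWord]

theorem conjugacyReduced_of_isCyclicallyReduced_toWord {m : ℕ}
    {H : Subgroup (FreeGroup (Fin m))} {g : FreeGroup (Fin m)} (hgH : g ∈ H) (hg : g ≠ 1)
    (hcyc : FreeGroup.IsCyclicallyReduced g.toWord) : ConjugacyReduced m H := by
  rintro ⟨x, hx⟩
  obtain ⟨hhead, hlast⟩ :=
    hx g.toWord (toWord_mem_LH_iff.mpr hgH) (FreeGroup.toWord_eq_nil_iff.not.mpr hg)
  exact getLast?_ne_of_isCyclicallyReduced hcyc hhead hlast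

theorem exists_conjugacy_reduced_conjugate_general (m : ℕ)
    (H : Subgroup (FreeGroup (Fin m))) (hnt : H ≠ ⊥) :
    ∃ g : FreeGroup (Fin m),
      ConjugacyReduced m (Subgroup.map (MulAut.conj g).toMonoidHom H) := by
  obtain ⟨h, hH, hne⟩ := H.bot_or_exists_ne_one.resolve_left hnt
  obtain ⟨c, hcyc⟩ := exists_isCyclicallyReduced_toWord_conj h
  have hmem : MulAut.conj c h ∈ H.map (MulAut.conj c).toMonoidHom :=
    Subgroup.mem_map_of_mem (MulAut.conj c).toMonoidHom hH
  have hconj_ne : MulAut.conj c h ≠ 1 := (MulAut.conj c).map_ne_one_iff.mpr hne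
  exact ⟨c, conjugacyReduced_of_isCyclicallyReduced_toWord hmem hconj_ne hcyc⟩

/-- Every nontrivial finitely generated subgroup `H ≤ F_m` has a conjugate `gHg⁻¹`
that is conjugacy reduced. -/
theorem exists_conjugacy_reduced_conjugate (m : ℕ) (hm : 1 ≤ m)
    (H : Subgroup (FreeGroup (Fin m))) (hnt : H ≠ ⊥) (hfg : H.FG) :
    ∃ g : FreeGroup (Fin m),
      ConjugacyReduced m (Subgroup.map (MulAut.conj g).toMonoidHom H) :=
  exists_conjugacy_reduced_conjugate_general m H hnt
end
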